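/- arXiv:1411.4545 — 3 statements merged into one kernel-verified Lean document; each statement's English description precedes it below -/
import Mathlib

section
/- Let q be a prime and let χ be an even (χ(−1) = 1) nontrivial Dirichlet character modulo q. Then L(1/2, χ̄) = Σ_{m≥1} χ̄(m) m^{−1/2} V₁(m/√q) + (τ(χ̄)/√q) · Σ_{m≥1} χ(m) m^{−1/2} V₁(m/√q), where both series on the right-hand side converge absolutely. -/
open Complex

/-- The weight function `V₁` from the approximate functional equation for `L(1/2, χ)`:
`V₁(x) = (1/2πi) ∫_(1) (√π x)^{-s} Γ((2s+1)/4)/Γ(1/4) ds/s`, the integral taken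
along the vertical line `Re s = 1`. -/
noncomputable def V₁ (x : ℝ) : ℂ :=
  (1 / (2 * Real.pi)) * ∫ t : ℝ,
    (((Real.sqrt Real.pi * x : ℝ) : ℂ) ^ (-(1 + t * I))) *
      (Complex.Gamma ((2 * (1 + t * I) + 1) / 4) / Complex.Gamma (1 / 4)) *
      (1 + t * I)⁻¹

/-- The Gauss sum `τ(χ) = ∑_{a mod q} χ(a) e(a/q)` of a Dirichlet character mod `q`. -/
noncomputable def gaussSumE {q : ℕ} [NeZero q] (χ : DirichletCharacter ℂ q) : ℂ :=
  ∑ a : ZMod q, χ a * Complex.exp (2 * Real.pi * I * a.val / q)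

section Helpers
open MeasureTheory Set

/-- incomplete Gamma-type integral -/
noncomputable def Wf (y : ℝ) : ℝ := ∫ v in Ioi (1:ℝ), Real.exp (-y * v) * v ^ (-(3/4):ℝ)

lemma Wf_integrable {y : ℝ} (hy : 0 < y) :
    IntegrableOn (fun v : ℝ => Real.exp (-y * v) * v ^ (-(3/4):ℝ)) (Ioi 1) := by
  refine Integrable.mono' (integrableOn_exp_mul_Ioi (by linarith : -y < 0) 1) ?_ ?_
  · exact Measurable.aestronglyMeasurable (by fun_prop)
  · refine (ae_restrict_iff' measurableSet_Ioi).2 (Filter.Eventually.of_forall fun v hv => ?_)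
    have hv : (1:ℝ) < v := hv
    rw [Real.norm_of_nonneg (by positivity)]
    exact mul_le_of_le_one_right (by positivity)
      (Real.rpow_le_one_of_one_le_of_nonpos hv.le (by norm_num))

lemma Wf_nonneg (y : ℝ) : 0 ≤ Wf y :=
  setIntegral_nonneg measurableSet_Ioi fun v hv => by
    have : (1:ℝ) < v := hv
    positivity

lemma Wf_le {y : ℝ} (hy : 0 < y) : Wf y ≤ 1 / y := by
  have h := integral_exp_mul_Ioi (by linarith : -y < 0) 1
  have : Wf y ≤ ∫ v in Ioi (1:ℝ), Real.exp (-y * v) := by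
    refine setIntegral_mono_on (Wf_integrable hy)
      (integrableOn_exp_mul_Ioi (by linarith : -y < 0) 1) measurableSet_Ioi fun v hv => ?_
    have hv : (1:ℝ) < v := hv
    exact mul_le_of_le_one_right (by positivity)
      (Real.rpow_le_one_of_one_le_of_nonpos hv.le (by norm_num))
  refine this.trans ?_
  rw [h, neg_div_neg_eq]
  gcongr
  rw [Real.exp_le_one_iff]; linarith

lemma Wf_continuousAt {y : ℝ} (hy : 0 < y) : ContinuousAt Wf y := by
  refine continuousAt_of_dominated (bound := fun v => Real.exp (-(y/2) * v) * v ^ (-(3/4):ℝ)) ?_ ?_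
    (Wf_integrable (by positivity)) ?_
  · exact Filter.Eventually.of_forall fun x => Measurable.aestronglyMeasurable (by fun_prop)
  · filter_upwards [lt_mem_nhds (by linarith : y / 2 < y)] with x hx
    refine (ae_restrict_iff' measurableSet_Ioi).2 (Filter.Eventually.of_forall fun v hv => ?_)
    have hv : (1:ℝ) < v := hv
    rw [Real.norm_of_nonneg (by positivity)]
    gcongr
  · exact Filter.Eventually.of_forall fun v => by fun_prop

lemma Wf_mellin {s : ℂ} (hs : 1/4 < s.re) :
    MellinConvergent (fun y => (Wf y : ℂ)) s ∧
      mellin (fun y => (Wf y : ℂ)) s = Gamma s / (s - 1/4) := by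
  have hs0 : 0 < s.re := by linarith
  let K : ℝ × ℝ → ℂ := fun p => (p.1 : ℂ) ^ (s - 1) * (Real.exp (-p.1 * p.2) * p.2 ^ (-(3/4):ℝ) : ℝ)
  have hKm : Measurable K := by
    have : Measurable fun p : ℝ × ℝ => (p.1 : ℂ) ^ (s - 1) :=
      (Complex.measurable_ofReal.comp measurable_fst).pow_const _
    have h2 : Measurable fun p : ℝ × ℝ => ((Real.exp (-p.1 * p.2) * p.2 ^ (-(3/4):ℝ) : ℝ) : ℂ) := by
      refine Complex.measurable_ofReal.comp ?_
      fun_prop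
    exact this.mul h2
  have hnorm : ∀ x ∈ Ioi (0:ℝ), ∀ v ∈ Ioi (1:ℝ), ‖K (x, v)‖ =
      v ^ (-(3/4):ℝ) * (x ^ (s.re - 1) * Real.exp (-(v * x))) := by
    intro x hx v hv
    have hx : 0 < x := hx
    have hv : 1 < v := hv
    simp only [K]
    rw [norm_mul, Complex.norm_cpow_eq_rpow_re_of_pos hx, Complex.norm_real,
      Real.norm_of_nonneg (by positivity)]
    simp only [sub_re, one_re]
    ring_nf
  have hintg1 : ∀ v ∈ Ioi (1:ℝ), IntegrableOn (fun x => K (x, v)) (Ioi 0) := by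
    intro v hv
    have hv' : 1 < v := hv
    have : IntegrableOn (fun x : ℝ => v ^ (-(3/4):ℝ) * (x ^ (s.re - 1) * Real.exp (-(v * x)))) (Ioi 0) := by
      refine Integrable.const_mul ?_ _
      have := integrableOn_rpow_mul_exp_neg_mul_rpow (p := 1) (s := s.re - 1) (b := v) (by linarith)
        one_pos (by linarith)
      simp only [Real.rpow_one, neg_mul] at this
      exact this
    refine Integrable.mono' this (hKm.comp (by fun_prop)).aestronglyMeasurable ?_
    refine (ae_restrict_iff' measurableSet_Ioi).2 (Filter.Eventually.of_forall fun x hx => ?_)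
    exact (hnorm x hx v hv).le
  have hintg2 : ∀ v ∈ Ioi (1:ℝ), ∫ x in Ioi (0:ℝ), ‖K (x, v)‖ = Real.Gamma s.re * v ^ (-(3/4) - s.re:ℝ) := by
    intro v hv
    have hv' : 1 < v := hv
    rw [setIntegral_congr_fun measurableSet_Ioi (fun x hx => hnorm x hx v hv), integral_const_mul,
      Real.integral_rpow_mul_exp_neg_mul_Ioi hs0 (by linarith), Real.rpow_sub (by linarith)]
    rw [one_div, Real.inv_rpow (by linarith)]
    field_simp
  have hintg2' : ∀ v ∈ Ioi (1:ℝ), ∫ x in Ioi (0:ℝ), K (x, v) = Gamma s * (v:ℂ) ^ (-(3/4) - s) := by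
    intro v hv
    have hv' : 1 < v := hv
    have h0 : (v:ℂ) ≠ 0 := by exact_mod_cast (by linarith : v ≠ 0)
    have : ∀ x ∈ Ioi (0:ℝ), K (x, v) = (v ^ (-(3/4):ℝ) : ℝ) * ((x:ℂ) ^ (s - 1) * cexp (-(v * x))) := by
      intro x hx
      simp only [K]
      push_cast
      ring_nf
    rw [setIntegral_congr_fun measurableSet_Ioi this, integral_const_mul,
      Complex.integral_cpow_mul_exp_neg_mul_Ioi hs0 (by linarith), Complex.cpow_sub _ _ h0,
      one_div, Complex.inv_cpow, Complex.ofReal_cpow (by linarith)]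
    · push_cast
      field_simp
    · rw [Complex.arg_ofReal_of_nonneg (by linarith)]; exact Real.pi_pos.ne
  have hK : Integrable K ((volume.restrict (Ioi 0)).prod (volume.restrict (Ioi 1))) := by
    rw [integrable_prod_iff' hKm.aestronglyMeasurable]
    constructor
    · exact (ae_restrict_iff' measurableSet_Ioi).2 (Filter.Eventually.of_forall hintg1)
    · refine Integrable.congr (f := fun v : ℝ => Real.Gamma s.re * v ^ (-(3/4) - s.re:ℝ)) ?_ ?_
      · exact (integrableOn_Ioi_rpow_of_lt (by linarith) one_pos).const_mul _
      · exact (ae_restrict_iff' measurableSet_Ioi).2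
          (Filter.Eventually.of_forall fun v hv => (hintg2 v hv).symm)
  have hin : ∀ x : ℝ, ∫ v in Ioi (1:ℝ), K (x, v) = (x:ℂ) ^ (s - 1) • (Wf x : ℂ) := by
    intro x
    simp only [K, Wf]
    rw [integral_const_mul, smul_eq_mul]
    congr 1
    exact integral_ofReal
  constructor
  · have := hK.integral_prod_left
    simp only [hin] at this
    exact this
  · rw [mellin]
    simp only [← hin]
    rw [integral_integral_swap hK, setIntegral_congr_fun measurableSet_Ioi hintg2',
      integral_const_mul, integral_Ioi_cpow_of_lt (by simp; linarith) one_pos]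
    simp only [ofReal_one, one_cpow]
    have : s - 1/4 ≠ 0 := by
      intro h
      have := congrArg re h
      norm_num at this
      linarith
    have h2 : -(3/4) - s + 1 ≠ 0 := by
      intro h; apply this; linear_combination -h
    rw [div_eq_mul_inv (Gamma s), neg_div, ← div_neg, one_div]
    congr 2
    ring

/-- The Mellin-inverse form. -/
noncomputable def Hf (x : ℝ) : ℂ := (x:ℂ) ^ (1/2:ℂ) • (Wf (x ^ (2:ℝ)) : ℂ)

lemma Hf_mellin {s : ℂ} (hs : 0 < s.re) :
    MellinConvergent Hf s ∧ mellin Hf s = Gamma ((2 * s + 1)/4) / s := by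
  have h := Wf_mellin (s := (2 * s + 1)/4) (by
    rw [show (2 * s + 1)/4 = ((1/2:ℝ):ℂ) * s + ((1/4:ℝ):ℂ) by push_cast; ring, add_re, re_ofReal_mul, ofReal_re]
    linarith)
  have e : (s + 1/2) / ((2:ℝ):ℂ) = (2 * s + 1)/4 := by push_cast; ring
  constructor
  · unfold Hf
    rw [MellinConvergent.cpow_smul, MellinConvergent.comp_rpow (f := fun y => (Wf y : ℂ)) two_ne_zero, e]
    exact h.1
  · unfold Hf
    rw [mellin_cpow_smul, mellin_comp_rpow (f := fun y => (Wf y : ℂ)), e, h.2]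
    have : s ≠ 0 := by rintro rfl; simp at hs
    have h2 : (2 * s + 1)/4 - 1/4 = s / 2 := by ring
    rw [h2]
    simp only [Nat.abs_ofNat, real_smul]
    push_cast
    field_simp

lemma Gamma_norm_le {z : ℂ} (hz : 0 < z.re) : ‖Gamma z‖ ≤ Real.Gamma z.re := by
  rw [Complex.Gamma_eq_integral hz, Real.Gamma_eq_integral hz, Complex.GammaIntegral]
  refine (norm_integral_le_integral_norm _).trans_eq ?_
  refine setIntegral_congr_fun measurableSet_Ioi fun x hx => ?_
  have hx : 0 < x := hx
  rw [norm_mul, Complex.norm_cpow_eq_rpow_re_of_pos hx, Complex.norm_real, Real.norm_of_nonneg (by positivity)]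
  simp

lemma vertInt : Integrable fun t : ℝ => Gamma ((2 * (1 + t * I) + 1)/4) / (1 + t * I) := by
  have hre : ∀ t : ℝ, ((2 * (1 + t * I) + 1)/4 : ℂ).re = 3/4 := fun t => by
    rw [show ((2 * (1 + t * I) + 1)/4 : ℂ) = ((3/4:ℝ):ℂ) + ((t/2:ℝ):ℂ) * I by push_cast; ring]
    rw [add_re, re_ofReal_mul, ofReal_re]; simp
  have hne : ∀ t : ℝ, (1 + t * I : ℂ) ≠ 0 := fun t h => by
    have := congrArg re h
    simp at this
  have hbound : Integrable fun t : ℝ => (2 * Real.Gamma (7/4)) * (1 + t ^ 2)⁻¹ :=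
    integrable_inv_one_add_sq.const_mul _
  refine Integrable.mono' hbound ?_ (Filter.Eventually.of_forall fun t => ?_)
  · refine Continuous.aestronglyMeasurable (continuous_iff_continuousAt.2 fun t => ?_)
    refine ContinuousAt.div ?_ (by fun_prop) (hne t)
    refine ContinuousAt.comp (f := fun t : ℝ => ((2 * (1 + t * I) + 1)/4 : ℂ)) (g := Gamma) ?_ (by fun_prop)
    refine (differentiableAt_Gamma _ fun m h => ?_).continuousAt
    have h1 := congrArg re h
    rw [hre] at h1
    simp only [neg_re, natCast_re] at h1
    have : (0:ℝ) ≤ m := Nat.cast_nonneg m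
    linarith
  · have hz : ((2 * (1 + t * I) + 1)/4 : ℂ) ≠ 0 := fun h => by
      have := congrArg re h
      rw [hre] at this
      norm_num at this
    have h1 := Gamma_norm_le (z := (2 * (1 + t * I) + 1)/4 + 1) (by
      rw [add_re, hre]; norm_num)
    rw [Complex.Gamma_add_one _ hz, norm_mul, add_re, hre, one_re, show (3/4 + 1 : ℝ) = 7/4 by norm_num] at h1
    have hw : ‖(1 + t * I : ℂ)‖ ^ 2 = 1 + t ^ 2 := by
      rw [← Complex.normSq_eq_norm_sq, Complex.normSq_apply]; simp; ring
    have hzn : ‖((2 * (1 + t * I) + 1)/4 : ℂ)‖ ^ 2 = 9/16 + t ^ 2 / 4 := by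
      rw [← Complex.normSq_eq_norm_sq, Complex.normSq_apply,
        show ((2 * (1 + t * I) + 1)/4 : ℂ) = ((3/4:ℝ):ℂ) + ((t/2:ℝ):ℂ) * I by push_cast; ring]
      simp; ring
    set a := ‖((2 * (1 + t * I) + 1)/4 : ℂ)‖
    set b := ‖(1 + t * I : ℂ)‖ with hb
    have hbpos : 0 < b := norm_pos_iff.2 (hne t)
    have hab : b ≤ 2 * a := by
      refine abs_le_of_sq_le_sq' ?_ (by positivity) |>.2
      nlinarith
    rw [norm_div, ← hb, ← hw, div_le_iff₀ hbpos]
    have : 2 * Real.Gamma (7/4) * (b ^ 2)⁻¹ * b = 2 * Real.Gamma (7/4) / b := by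
      field_simp
    rw [this, le_div_iff₀ hbpos]
    nlinarith [norm_nonneg (Gamma ((2 * (1 + t * I) + 1)/4))]

lemma V₁_eq {x : ℝ} (hx : 0 < x) : V₁ x = Hf (Real.sqrt Real.pi * x) / Gamma (1/4) := by
  have hy : 0 < Real.sqrt Real.pi * x := by positivity
  have hm : ∀ t : ℝ, mellin Hf (1 + t * I) = Gamma ((2 * (1 + t * I) + 1)/4) / (1 + t * I) :=
    fun t => (Hf_mellin (by simp)).2
  have key := mellinInv_mellin_eq 1 Hf hy (Hf_mellin (by simp)).1 (by
      unfold VerticalIntegrable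
      simp only [ofReal_one, hm]
      exact vertInt) (by
      unfold Hf
      simp only [smul_eq_mul]
      refine ContinuousAt.mul ?_ ?_
      · exact ContinuousAt.comp (f := fun x : ℝ => (x:ℂ)) (g := fun z : ℂ => z ^ (1/2:ℂ)) (continuousAt_cpow_const (by
          rw [ofReal_mem_slitPlane]; exact hy)) (by fun_prop)
      · refine Complex.continuous_ofReal.continuousAt.comp ?_
        refine ContinuousAt.comp (f := fun x : ℝ => x ^ (2:ℝ)) (g := Wf) (Wf_continuousAt (by positivity)) ?_
        exact Real.continuousAt_rpow_const _ _ (Or.inr (by norm_num)))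
  rw [← key, mellinInv, V₁]
  simp only [ofReal_one, hm]
  rw [real_smul, mul_div_assoc, ← integral_div]
  push_cast
  congr 2
  ext t
  rw [smul_eq_mul]
  ring
open HurwitzZeta

lemma hasSum_even {N : ℕ} [NeZero N] (ψ : ZMod N → ℂ) {t : ℝ} (ht : 0 < t) :
    HasSum (fun m : ℤ => ψ m * (Real.exp (-Real.pi * m ^ 2 * t) : ℝ))
      (∑ j : ZMod N, ψ j * (evenKernel (ZMod.toAddCircle j) ((N:ℝ) ^ 2 * t) : ℝ)) := by
  have hN : (0:ℝ) < N := Nat.cast_pos.2 (NeZero.pos N)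
  have hN0 : (N:ℤ) ≠ 0 := by exact_mod_cast NeZero.ne N
  have h1 : ∀ j : ZMod N, HasSum (fun m : ℤ => if (m : ZMod N) = j then
      ψ m * (Real.exp (-Real.pi * m ^ 2 * t) : ℝ) else 0)
      (ψ j * (evenKernel (ZMod.toAddCircle j) ((N:ℝ) ^ 2 * t) : ℝ)) := by
    intro j
    have h2 := hasSum_int_evenKernel ((j.val : ℝ) / N) (t := (N:ℝ) ^ 2 * t) (by positivity)
    rw [← Complex.hasSum_ofReal] at h2
    replace h2 := h2.mul_left (ψ j)
    rw [ZMod.toAddCircle_apply]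
    have hinj : Function.Injective (fun n : ℤ => (N:ℤ) * n + j.val) := by
      intro a b hab
      have hab' : (N:ℤ) * a + j.val = (N:ℤ) * b + j.val := hab
      exact mul_left_cancel₀ hN0 (add_right_cancel hab')
    rw [← hinj.hasSum_iff]
    · refine h2.congr_fun fun n => ?_
      simp only [Function.comp]
      have : (((N:ℤ) * n + j.val : ℤ) : ZMod N) = j := by simp
      rw [if_pos this, this]
      congr 3
      push_cast
      field_simp
    · intro m hm
      rw [if_neg]
      rintro rfl
      apply hm
      refine ⟨m / N, ?_⟩
      simp only [ZMod.val_intCast]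
      exact Int.mul_ediv_add_emod m N
  have h3 := hasSum_sum (s := Finset.univ) fun j _ => h1 j
  simpa using h3

lemma hasSum_cos {N : ℕ} [NeZero N] (ψ : DirichletCharacter ℂ N) (hψ : ψ.IsPrimitive) {t : ℝ}
    (ht : 0 < t) :
    HasSum (fun m : ℤ => gaussSum ψ ZMod.stdAddChar * (ψ⁻¹ m * (Real.exp (-Real.pi * m ^ 2 * t) : ℝ)))
      (∑ j : ZMod N, ψ j * (cosKernel (ZMod.toAddCircle j) t : ℝ)) := by
  have h1 : ∀ j : ZMod N, HasSum (fun m : ℤ => ψ j * (ZMod.stdAddChar (m * j : ZMod N) *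
      (Real.exp (-Real.pi * m ^ 2 * t) : ℝ))) (ψ j * (cosKernel (ZMod.toAddCircle j) t : ℝ)) := by
    intro j
    refine HasSum.mul_left _ ?_
    rw [ZMod.toAddCircle_apply]
    refine (hasSum_int_cosKernel ((j.val : ℝ) / N) ht).congr_fun fun m => ?_
    congr 1
    have : (m * j : ZMod N) = ((m * j.val : ℤ) : ZMod N) := by simp
    rw [this, ZMod.stdAddChar_coe]
    congr 1
    push_cast
    ring
  refine (hasSum_sum (s := Finset.univ) fun j _ => h1 j).congr_fun fun m => ?_
  rw [← mul_assoc, mul_comm (gaussSum _ _), ← gaussSum_mulShift_of_isPrimitive _ hψ, gaussSum,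
    Finset.sum_mul]
  refine Finset.sum_congr rfl fun j _ => ?_
  rw [AddChar.mulShift_apply]
  ring

/-- half theta series -/
noncomputable def th {N : ℕ} (ψ : ZMod N → ℂ) (t : ℝ) : ℂ :=
  ∑' n : ℕ, 2 * ψ ((n + 1 : ℕ) : ZMod N) * (Real.exp (-Real.pi * (n + 1) ^ 2 * t) : ℝ)

lemma hasSum_th {N : ℕ} (ψ : ZMod N → ℂ) (h0 : ψ 0 = 0) (he : ∀ a, ψ (-a) = ψ a) {t : ℝ} {S : ℂ}
    (h : HasSum (fun m : ℤ => ψ m * (Real.exp (-Real.pi * m ^ 2 * t) : ℝ)) S) : th ψ t = S := by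
  have := h.nat_add_neg
  rw [← hasSum_nat_add_iff' 1] at this
  simp [h0, he] at this
  refine HasSum.tsum_eq ?_
  refine this.congr_fun fun n => ?_
  have e : ψ (-1 + -(n : ZMod N)) = ψ (n + 1) := by
    rw [← he]; congr 1; ring
  have e2 : (-1 + -(n : ℂ)) ^ 2 = ((n : ℂ) + 1) ^ 2 := by ring
  rw [e, e2]
  push_cast
  ring_nf

noncomputable def Ef {N : ℕ} [NeZero N] (ψ : ZMod N → ℂ) (t : ℝ) : ℂ :=
  ∑ j : ZMod N, ψ j * (evenKernel (ZMod.toAddCircle j) t : ℝ)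

lemma Ef_eq {N : ℕ} [NeZero N] (ψ : ZMod N → ℂ) (h0 : ψ 0 = 0) (he : ∀ a, ψ (-a) = ψ a) {x : ℝ}
    (hx : 0 < x) : Ef ψ (N * x) = th ψ (x / N) := by
  have hN : (0:ℝ) < N := Nat.cast_pos.2 (NeZero.pos N)
  rw [hasSum_th ψ h0 he (hasSum_even ψ (t := x / N) (by positivity)), Ef]
  have e : (N:ℝ) ^ 2 * (x / N) = N * x := by field_simp
  rw [e]

lemma Ef_inv {N : ℕ} [NeZero N] (ψ : DirichletCharacter ℂ N) (hψ : ψ.IsPrimitive)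
    (h0 : ψ 0 = 0) (he : ∀ a, ψ (-a) = ψ a) {x : ℝ} (hx : 0 < x) :
    Ef ψ (N * x⁻¹) = ((x / N) ^ (1/2 : ℝ) : ℝ) * (gaussSum ψ ZMod.stdAddChar * th (ψ⁻¹ : DirichletCharacter ℂ N) (x / N)) := by
  have hN : (0:ℝ) < N := Nat.cast_pos.2 (NeZero.pos N)
  have h1 := hasSum_cos ψ hψ (t := x / N) (by positivity)
  have hτ : gaussSum ψ ZMod.stdAddChar * th (ψ⁻¹ : DirichletCharacter ℂ N) (x / N) =
      ∑ j : ZMod N, ψ j * (cosKernel (ZMod.toAddCircle j) (x / N) : ℝ) := by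
    have hs : Summable (fun m : ℤ => ψ⁻¹ m * ((Real.exp (-Real.pi * m ^ 2 * (x / N)) : ℝ) : ℂ)) :=
      (hasSum_even (ψ⁻¹ : DirichletCharacter ℂ N) (t := x / N) (by positivity)).summable
    rw [hasSum_th _ ?_ ?_ hs.hasSum]
    · exact (hs.hasSum.mul_left _).unique h1
    · rw [MulChar.inv_apply_eq_inv', h0, inv_zero]
    · intro a; rw [MulChar.inv_apply_eq_inv', MulChar.inv_apply_eq_inv', he]
  rw [hτ, Ef, Finset.mul_sum]
  refine Finset.sum_congr rfl fun j _ => ?_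
  rw [evenKernel_functional_equation]
  have e1 : 1 / ((N:ℝ) * x⁻¹) = x / N := by field_simp
  have e2 : 1 / ((N:ℝ) * x⁻¹) ^ (1/2:ℝ) = (x / N) ^ (1/2:ℝ) := by
    rw [one_div, ← Real.inv_rpow (by positivity), ← one_div, e1]
  rw [e1, e2]
  push_cast
  ring

lemma WeakFE_conv (P : WeakFEPair ℂ) (s : ℂ) : MellinConvergent P.f_modif s :=
  (P.isStrongFEPair_toStrongFEPair.hasMellin s).1

lemma completed_eq {N : ℕ} [NeZero N] (ψ : ZMod N → ℂ) (h0 : ψ 0 = 0) (hs : ∑ j, ψ j = 0)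
    (he : ∀ a, ψ (-a) = ψ a) (s : ℂ) :
    MellinConvergent (Ef ψ) (s / 2) ∧
    ZMod.completedLFunction ψ s = (N:ℂ) ^ (-s) * (mellin (Ef ψ) (s / 2) / 2) := by
  let P : ZMod N → WeakFEPair ℂ := fun j => hurwitzEvenFEPair (ZMod.toAddCircle j)
  have hP0 : ∀ j, ψ j * (P j).f₀ = 0 := fun j => by
    simp only [P, hurwitzEvenFEPair, ZMod.toAddCircle_eq_zero]
    split_ifs with h
    · simp [h, h0]
    · simp
  have hae : ∀ᵐ x : ℝ ∂(volume.restrict (Ioi 0)), ∑ j, ψ j * (P j).f_modif x = Ef ψ x := by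
    rw [ae_restrict_iff' measurableSet_Ioi]
    filter_upwards [compl_mem_ae_iff.mpr (Subsingleton.measure_zero (s := {(1:ℝ)}) (by simp) _)]
      with x (hx1 : x ≠ 1) (hx0 : 0 < x)
    rcases lt_or_gt_of_ne hx1 with h | h
    · have : ∀ j, ψ j * (P j).f_modif x = ψ j * (evenKernel (ZMod.toAddCircle j) x : ℝ) -
          ψ j * ((x ^ (-(1/2:ℝ)) : ℝ) : ℂ) := by
        intro j
        rw [WeakFEPair.f_modif, Pi.add_apply, indicator_of_notMem (by simp [h.le]),
          indicator_of_mem (by exact ⟨hx0, h⟩)]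
        simp [P, hurwitzEvenFEPair, mul_sub]
      simp only [this, Finset.sum_sub_distrib, ← Finset.sum_mul, hs, zero_mul, sub_zero, Ef]
    · have : ∀ j, ψ j * (P j).f_modif x = ψ j * (evenKernel (ZMod.toAddCircle j) x : ℝ) := by
        intro j
        rw [WeakFEPair.f_modif, Pi.add_apply, indicator_of_mem (by exact h),
          indicator_of_notMem (by simp [h.le]), add_zero, mul_sub, hP0]
        simp [P, hurwitzEvenFEPair]
      simp only [this, Ef]
  have hae' : ∀ᵐ x : ℝ ∂(volume.restrict (Ioi 0)),
      ∑ j, ψ j * ((x:ℂ) ^ (s / 2 - 1) • (P j).f_modif x) = (x:ℂ) ^ (s / 2 - 1) • Ef ψ x := by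
    filter_upwards [hae] with x hx
    rw [← hx, smul_eq_mul, Finset.mul_sum]
    refine Finset.sum_congr rfl fun j _ => ?_
    rw [smul_eq_mul]; ring
  have hintg : ∀ j ∈ Finset.univ, Integrable (fun x : ℝ => ψ j * ((x:ℂ) ^ (s / 2 - 1) • (P j).f_modif x))
      (volume.restrict (Ioi 0)) := fun j _ => (WeakFE_conv (P j) (s / 2)).const_mul _
  constructor
  · exact (integrable_finsetSum _ hintg).congr hae'
  · rw [ZMod.completedLFunction_def_even he]
    congr 1
    rw [mellin, ← integral_congr_ae hae', integral_finsetSum _ hintg, Finset.sum_div]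
    simp only [integral_const_mul]
    have e : ∀ j, ∫ x in Ioi (0:ℝ), ((x:ℂ) ^ (s / 2 - 1) • (P j).f_modif x) = (P j).Λ₀ (s / 2) :=
      fun j => rfl
    simp only [e, WeakFEPair.Λ₀_eq, completedHurwitzZetaEven]
    have e2 : ∀ j, ψ j * ((P j).Λ (s / 2) + (1 / (s / 2)) • (P j).f₀ +
        ((P j).ε / ((P j).k - s / 2)) • (P j).g₀) / 2 = ψ j * ((P j).Λ (s / 2) / 2) +
        ψ j * (1 / (((1/2:ℝ):ℂ) - s / 2) / 2) := by
      intro j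
      have := hP0 j
      have e3 : ((P j).ε / ((P j).k - s / 2)) • (P j).g₀ = 1 / (((1/2:ℝ):ℂ) - s / 2) := by
        simp [P, hurwitzEvenFEPair]
      rw [e3, smul_eq_mul]
      linear_combination (1 / (s / 2)) / 2 * this
    simp only [e2, Finset.sum_add_distrib, ← Finset.sum_mul, hs, zero_mul, add_zero, P]

lemma hasSum_C {N : ℕ} [NeZero N] (ψ : ZMod N → ℂ) (hb : ∀ a, ‖ψ a‖ ≤ 1) :
    Summable (fun n : ℕ => ‖ψ ((n + 1 : ℕ) : ZMod N) * (Wf (Real.pi * (n + 1) ^ 2 / N) : ℂ)‖) ∧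
    ∫ x in Ioi (1:ℝ), ((x ^ (-(3/4) : ℝ) : ℝ) : ℂ) * th ψ (x / N) =
      2 * ∑' n : ℕ, ψ ((n + 1 : ℕ) : ZMod N) * (Wf (Real.pi * (n + 1) ^ 2 / N) : ℂ) := by
  have hN : (0:ℝ) < N := Nat.cast_pos.2 (NeZero.pos N)
  have hy : ∀ n : ℕ, 0 < Real.pi * (n + 1 : ℝ) ^ 2 / N := fun n => by positivity
  have hW : Summable (fun n : ℕ => Wf (Real.pi * (n + 1) ^ 2 / N)) := by
    have h1 : Summable (fun n : ℕ => (N / Real.pi : ℝ) * (1 / ((n + 1 : ℕ) : ℝ) ^ 2)) :=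
      ((summable_nat_add_iff 1).2 (Real.summable_one_div_nat_pow.2 one_lt_two)).mul_left _
    refine Summable.of_nonneg_of_le (fun n => Wf_nonneg _) (fun n => ?_) h1
    refine (Wf_le (hy n)).trans_eq ?_
    push_cast
    field_simp
  have hn : ∀ n : ℕ, ‖ψ ((n + 1 : ℕ) : ZMod N) * (Wf (Real.pi * (n + 1) ^ 2 / N) : ℂ)‖ ≤
      Wf (Real.pi * (n + 1) ^ 2 / N) := fun n => by
    rw [norm_mul, Complex.norm_real, Real.norm_of_nonneg (Wf_nonneg _)]
    exact mul_le_of_le_one_left (Wf_nonneg _) (hb _)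
  refine ⟨Summable.of_nonneg_of_le (fun n => norm_nonneg _) hn hW, ?_⟩
  let F : ℕ → ℝ → ℂ := fun n x => (2 * ψ ((n + 1 : ℕ) : ZMod N)) *
    ((Real.exp (-(Real.pi * (n + 1) ^ 2 / N) * x) * x ^ (-(3/4):ℝ) : ℝ) : ℂ)
  have hFi : ∀ n, Integrable (F n) (volume.restrict (Ioi 1)) := fun n =>
    (Wf_integrable (hy n)).ofReal.const_mul _
  have hFs : Summable fun n => ∫ x in Ioi (1:ℝ), ‖F n x‖ := by
    refine Summable.of_nonneg_of_le (fun n => integral_nonneg fun x => norm_nonneg _) (fun n => ?_)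
      (hW.mul_left 2)
    have : ∀ x ∈ Ioi (1:ℝ), ‖F n x‖ = ‖2 * ψ ((n + 1 : ℕ) : ZMod N)‖ *
      (Real.exp (-(Real.pi * (n + 1) ^ 2 / N) * x) * x ^ (-(3/4):ℝ)) := by
      intro x hx
      have hx : 1 < x := hx
      simp only [F]
      rw [norm_mul, Complex.norm_real, Real.norm_of_nonneg (by positivity)]
    rw [setIntegral_congr_fun measurableSet_Ioi this, integral_const_mul]
    refine mul_le_mul_of_nonneg_right ?_ (Wf_nonneg _)
    rw [norm_mul]
    simpa using hb _
  have key := hasSum_integral_of_summable_integral_norm hFi hFs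
  have hFint : ∀ n, ∫ x in Ioi (1:ℝ), F n x =
      2 * (ψ ((n + 1 : ℕ) : ZMod N) * (Wf (Real.pi * (n + 1) ^ 2 / N) : ℂ)) := fun n => by
    simp only [F, Wf]
    rw [integral_const_mul, ← mul_assoc]
    congr 1
    exact integral_ofReal
  simp only [hFint] at key
  rw [← tsum_mul_left, key.tsum_eq]
  refine setIntegral_congr_fun measurableSet_Ioi fun x hx => ?_
  simp only [th, F]
  rw [← tsum_mul_left]
  refine tsum_congr fun n => ?_
  have : -Real.pi * ((n:ℝ) + 1) ^ 2 * (x / N) = -(Real.pi * (n + 1) ^ 2 / N) * x := by ring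
  rw [this]
  push_cast
  ring

lemma mellin_split {N : ℕ} [NeZero N] (ψ : DirichletCharacter ℂ N) (hψ : ψ.IsPrimitive)
    (h0 : ψ 0 = 0) (he : ∀ a, ψ (-a) = ψ a) (hc : MellinConvergent (Ef ψ) (1/4)) :
    mellin (Ef ψ) (1/4) = ((N ^ (1/4:ℝ) : ℝ) : ℂ) *
      ((∫ x in Ioi (1:ℝ), ((x ^ (-(3/4) : ℝ) : ℝ) : ℂ) * th ψ (x / N)) +
      gaussSum ψ ZMod.stdAddChar / (Real.sqrt N : ℝ) *
       ∫ x in Ioi (1:ℝ), ((x ^ (-(3/4) : ℝ) : ℝ) : ℂ) * th (ψ⁻¹ : DirichletCharacter ℂ N) (x / N)) := by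
  have hN : (0:ℝ) < N := Nat.cast_pos.2 (NeZero.pos N)
  let f : ℝ → ℂ := fun x => Ef ψ (N * x)
  have hcf : MellinConvergent f (1/4) := (MellinConvergent.comp_mul_left hN).2 hc
  have hmf : mellin f (1/4) = ((N:ℝ):ℂ) ^ (-(1/4):ℂ) • mellin (Ef ψ) (1/4) := mellin_comp_mul_left _ _ hN
  have hmf' : mellin (Ef ψ) (1/4) = ((N ^ (1/4:ℝ) : ℝ) : ℂ) * mellin f (1/4) := by
    rw [hmf, smul_eq_mul, ← mul_assoc, Complex.ofReal_cpow hN.le, Complex.cpow_neg]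
    push_cast
    rw [mul_inv_cancel₀, one_mul]
    rw [Ne, Complex.cpow_eq_zero_iff]
    intro h
    exact hN.ne' (by exact_mod_cast h.1)
  rw [hmf']
  congr 1
  have hsplit : mellin f (1/4) = (∫ x in Ioc (0:ℝ) 1, (x:ℂ) ^ ((1/4:ℂ) - 1) • f x) +
      ∫ x in Ioi (1:ℝ), (x:ℂ) ^ ((1/4:ℂ) - 1) • f x := by
    rw [mellin, ← Ioc_union_Ioi_eq_Ioi zero_le_one]
    refine setIntegral_union ?_ measurableSet_Ioi ?_ ?_
    · exact Set.Ioc_disjoint_Ioi le_rfl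
    · exact hcf.mono_set Ioc_subset_Ioi_self
    · exact hcf.mono_set (Ioi_subset_Ioi zero_le_one)
  have hlow : (∫ x in Ioc (0:ℝ) 1, (x:ℂ) ^ ((1/4:ℂ) - 1) • f x) =
      ∫ x in Ioi (1:ℝ), (x:ℂ) ^ (-(1/4:ℂ) - 1) • f x⁻¹ := by
    have h1 : (∫ x in Ioc (0:ℝ) 1, (x:ℂ) ^ ((1/4:ℂ) - 1) • f x) =
        mellin ((Ioc (0:ℝ) 1).indicator f) (1/4) := by
      rw [mellin]
      have e : ∀ x ∈ Ioi (0:ℝ), (x:ℂ) ^ ((1/4:ℂ) - 1) • (Ioc (0:ℝ) 1).indicator f x =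
          (Ioc (0:ℝ) 1).indicator (fun x : ℝ => (x:ℂ) ^ ((1/4:ℂ) - 1) • f x) x := by
        intro x _
        by_cases h : x ∈ Ioc (0:ℝ) 1
        · rw [indicator_of_mem h, indicator_of_mem h]
        · rw [indicator_of_notMem h, indicator_of_notMem h, smul_zero]
      rw [setIntegral_congr_fun measurableSet_Ioi e, setIntegral_indicator measurableSet_Ioc,
        inter_eq_self_of_subset_right Ioc_subset_Ioi_self]
    have h2 := mellin_comp_inv ((Ioc (0:ℝ) 1).indicator f) (-(1/4))
    rw [neg_neg] at h2
    rw [h1, ← h2, mellin]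
    have e : ∀ x ∈ Ioi (0:ℝ), (x:ℂ) ^ (-(1/4:ℂ) - 1) • (Ioc (0:ℝ) 1).indicator f x⁻¹ =
        (Ici (1:ℝ)).indicator (fun x : ℝ => (x:ℂ) ^ (-(1/4:ℂ) - 1) • f x⁻¹) x := by
      intro x hx
      have hx : 0 < x := hx
      by_cases h : 1 ≤ x
      · rw [indicator_of_mem (show x⁻¹ ∈ Ioc (0:ℝ) 1 from ⟨inv_pos.2 hx, inv_le_one_of_one_le₀ h⟩),
          indicator_of_mem (show x ∈ Ici (1:ℝ) from h)]
      · rw [indicator_of_notMem, indicator_of_notMem (show x ∉ Ici (1:ℝ) from h), smul_zero]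
        rintro ⟨_, h3⟩
        exact h ((inv_le_one₀ hx).1 h3)
    rw [setIntegral_congr_fun measurableSet_Ioi e, setIntegral_indicator measurableSet_Ici,
      inter_eq_self_of_subset_right (show Ici (1:ℝ) ⊆ Ioi 0 from Ici_subset_Ioi.2 one_pos),
      integral_Ici_eq_integral_Ioi]
  rw [hsplit, hlow, add_comm]
  congr 1
  · refine setIntegral_congr_fun measurableSet_Ioi fun x hx => ?_
    have hx : 0 < x := one_pos.trans hx
    simp only [f]
    rw [Ef_eq ψ h0 he hx, smul_eq_mul, Complex.ofReal_cpow hx.le]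
    congr 2
    push_cast
    ring
  · rw [← integral_const_mul]
    refine setIntegral_congr_fun measurableSet_Ioi fun x hx => ?_
    have hx : 0 < x := one_pos.trans hx
    simp only [f]
    rw [Ef_inv ψ hψ h0 he hx, smul_eq_mul]
    have e1 : (x:ℂ) ^ (-(1/4:ℂ) - 1) = ((x ^ (-(5/4):ℝ) : ℝ) : ℂ) := by
      rw [Complex.ofReal_cpow hx.le]; congr 1; push_cast; ring
    have e2 : x ^ (-(5/4):ℝ) * (x / N) ^ (1/2:ℝ) = x ^ (-(3/4):ℝ) / Real.sqrt N := by
      rw [Real.div_rpow hx.le hN.le, ← Real.sqrt_eq_rpow N, ← mul_div_assoc, ← Real.rpow_add hx]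
      norm_num
    have e3 := congrArg (fun y : ℝ => (y:ℂ)) e2
    push_cast at e3
    rw [e1]
    push_cast
    linear_combination (gaussSum ψ ZMod.stdAddChar * th (ψ⁻¹ : DirichletCharacter ℂ N) (x / N)) * e3

lemma gaussSumE_eq {q : ℕ} [NeZero q] (ψ : DirichletCharacter ℂ q) :
    gaussSumE ψ = gaussSum ψ ZMod.stdAddChar := by
  rw [gaussSumE, gaussSum]
  refine Finset.sum_congr rfl fun a _ => ?_
  rw [ZMod.stdAddChar_apply, ZMod.toCircle_apply]

lemma term_eq {q : ℕ} [NeZero q] (c : ℂ) (n : ℕ) :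
    c / (Real.sqrt (n + 1) : ℂ) * V₁ ((n + 1) / Real.sqrt q) =
      (((Real.pi / q) ^ (1/4:ℝ) : ℝ) : ℂ) / Gamma (1/4) *
        (c * (Wf (Real.pi * (n + 1) ^ 2 / q) : ℂ)) := by
  have hq : (0:ℝ) < q := Nat.cast_pos.2 (NeZero.pos q)
  have hn : (0:ℝ) < n + 1 := by positivity
  have hpi := Real.pi_pos
  have hpos : 0 < Real.sqrt Real.pi * ((n + 1) / Real.sqrt q) := by positivity
  rw [V₁_eq (by positivity), Hf, smul_eq_mul]
  have e1 : (Real.sqrt Real.pi * ((n + 1) / Real.sqrt q)) ^ (2:ℝ) =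
      Real.pi * (n + 1) ^ 2 / q := by
    rw [Real.rpow_two, mul_pow, div_pow, Real.sq_sqrt hpi.le, Real.sq_sqrt hq.le, mul_div_assoc]
  have e2 : ((Real.sqrt Real.pi * ((n + 1) / Real.sqrt q) : ℝ) : ℂ) ^ (1/2:ℂ) =
      (((Real.pi / q) ^ (1/4:ℝ) : ℝ) : ℂ) * (Real.sqrt (n + 1) : ℂ) := by
    have : (Real.sqrt Real.pi * ((n + 1) / Real.sqrt q)) ^ (1/2:ℝ) =
        (Real.pi / q) ^ (1/4:ℝ) * Real.sqrt (n + 1) := by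
      have h : Real.sqrt Real.pi * ((n + 1) / Real.sqrt q) =
          (Real.pi / q) ^ (1/2:ℝ) * (n + 1) := by
        rw [← Real.sqrt_eq_rpow, Real.sqrt_div hpi.le]; ring
      rw [h, Real.mul_rpow (by positivity) hn.le, ← Real.rpow_mul (by positivity),
        Real.sqrt_eq_rpow (n + 1)]
      norm_num
    rw [← Complex.ofReal_mul, ← this, Complex.ofReal_cpow hpos.le]
    norm_num
  have e3 : (Real.sqrt (n + 1) : ℂ) ≠ 0 := by
    exact_mod_cast (Real.sqrt_pos.2 hn).ne'
  rw [e1, e2]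
  field_simp

lemma main_aux {q : ℕ} [NeZero q] (hq : q.Prime) (ψ : DirichletCharacter ℂ q)
    (hψ : ψ ≠ 1) (heven : ψ (-1) = 1) :
    DirichletCharacter.LFunction ψ (1 / 2) =
      (((Real.pi / q) ^ (1/4:ℝ) : ℝ) : ℂ) / Gamma (1/4) *
      ((∑' n : ℕ, ψ ((n + 1 : ℕ) : ZMod q) * (Wf (Real.pi * (n + 1) ^ 2 / q) : ℂ)) +
      gaussSum ψ ZMod.stdAddChar / (Real.sqrt q : ℂ) *
        ∑' n : ℕ, ψ⁻¹ ((n + 1 : ℕ) : ZMod q) * (Wf (Real.pi * (n + 1) ^ 2 / q) : ℂ)) := by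
  have : Fact q.Prime := ⟨hq⟩
  have hq0 : (0:ℝ) < q := Nat.cast_pos.2 (NeZero.pos q)
  have hpi := Real.pi_pos
  have hprim : ψ.IsPrimitive := by
    rcases (Nat.dvd_prime hq).1 ψ.conductor_dvd_level with h | h
    · exact absurd ((DirichletCharacter.eq_one_iff_conductor_eq_one).2 h) hψ
    · exact h
  have h0 : ψ 0 = 0 := MulChar.map_zero ψ
  have hE : ψ.Even := heven
  have he : ∀ a, ψ (-a) = ψ a := fun a => hE.to_fun a
  have hs : ∑ j, ψ j = 0 := MulChar.sum_eq_zero_of_ne_one hψ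
  obtain ⟨hc, hL⟩ := completed_eq ψ h0 hs he (1/2)
  have h14 : (1/2:ℂ)/2 = 1/4 := by norm_num
  rw [h14] at hc hL
  rw [mellin_split ψ hprim h0 he hc, (hasSum_C ψ (fun a => ψ.norm_le_one a)).2,
    (hasSum_C (ψ⁻¹ : DirichletCharacter ℂ q) (fun a => DirichletCharacter.norm_le_one _ a)).2] at hL
  rw [DirichletCharacter.LFunction_eq_completed_div_gammaFactor ψ (1/2) (Or.inr hq.one_lt.ne'),
    hE.gammaFactor_def, Gammaℝ_def, h14]
  change ZMod.completedLFunction ψ (1/2) / _ = _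
  rw [hL]
  have e1 : (Real.pi : ℂ) ^ (-(1/2:ℂ)/2) = ((Real.pi ^ (-(1/4):ℝ) : ℝ) : ℂ) := by
    rw [Complex.ofReal_cpow hpi.le]; congr 1; push_cast; ring
  have e2 : (q : ℂ) ^ (-(1/2:ℂ)) = (((q:ℝ) ^ (-(1/2):ℝ) : ℝ) : ℂ) := by
    rw [Complex.ofReal_cpow hq0.le]; congr 1; push_cast; ring
  have e3 : (Real.pi / q) ^ (1/4:ℝ) = (q:ℝ) ^ (-(1/2):ℝ) * (q:ℝ) ^ (1/4:ℝ) * (Real.pi ^ (-(1/4):ℝ))⁻¹ := by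
    rw [Real.div_rpow hpi.le hq0.le, ← Real.rpow_add hq0, Real.rpow_neg hpi.le, inv_inv,
      show (-(1/2) + 1/4 : ℝ) = -(1/4) by norm_num, Real.rpow_neg hq0.le]
    field_simp
  rw [e1, e2, e3, Complex.ofReal_mul, Complex.ofReal_mul, Complex.ofReal_inv]
  ring

end Helpers

/-- **Approximate functional equation for `L(1/2, χ̄)`.** For `q` a prime and `χ` an even
nontrivial (equivalently, primitive) Dirichlet character mod `q`,
`L(1/2, χ̄) = ∑_{m ≥ 1} χ̄(m) m^{-1/2} V₁(m/√q) + (τ(χ̄)/√q) ∑_{m ≥ 1} χ(m) m^{-1/2} V₁(m/√q)`,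
both series converging absolutely. -/
theorem stmt1 (q : ℕ) [NeZero q] (hq : q.Prime) (χ : DirichletCharacter ℂ q)
    (hχ : χ ≠ 1) (heven : χ (-1) = 1) :
    Summable (fun m : ℕ =>
      ‖(χ.ringHomComp (starRingEnd ℂ)) ((m + 1 : ℕ) : ZMod q) /
          (Real.sqrt (m + 1) : ℂ) * V₁ ((m + 1) / Real.sqrt q)‖) ∧
    Summable (fun m : ℕ =>
      ‖χ ((m + 1 : ℕ) : ZMod q) / (Real.sqrt (m + 1) : ℂ) *
          V₁ ((m + 1) / Real.sqrt q)‖) ∧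
    DirichletCharacter.LFunction (χ.ringHomComp (starRingEnd ℂ)) (1 / 2) =
      (∑' m : ℕ, (χ.ringHomComp (starRingEnd ℂ)) ((m + 1 : ℕ) : ZMod q) /
          (Real.sqrt (m + 1) : ℂ) * V₁ ((m + 1) / Real.sqrt q)) +
      gaussSumE (χ.ringHomComp (starRingEnd ℂ)) / (Real.sqrt q : ℂ) *
        ∑' m : ℕ, χ ((m + 1 : ℕ) : ZMod q) / (Real.sqrt (m + 1) : ℂ) *
          V₁ ((m + 1) / Real.sqrt q) := by
  have hbar : χ.ringHomComp (starRingEnd ℂ) = χ⁻¹ := MulChar.star_eq_inv χ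
  rw [hbar]
  have hinv : (χ⁻¹ : DirichletCharacter ℂ q) ≠ 1 := inv_ne_one.2 hχ
  have heven' : (χ⁻¹ : DirichletCharacter ℂ q) (-1) = 1 := by
    rw [MulChar.inv_apply_eq_inv', heven, inv_one]
  simp only [term_eq]
  refine ⟨?_, ?_, ?_⟩
  · simp only [norm_mul _ (_ * _)]
    exact (hasSum_C (χ⁻¹ : DirichletCharacter ℂ q)
      (fun a => DirichletCharacter.norm_le_one _ a)).1.mul_left _
  · simp only [norm_mul _ (_ * _)]
    exact (hasSum_C χ (fun a => DirichletCharacter.norm_le_one _ a)).1.mul_left _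
  · have h := main_aux hq χ⁻¹ hinv heven'
    rw [inv_inv] at h
    rw [h, gaussSumE_eq, tsum_mul_left, tsum_mul_left]
    ring
end

section
/- For every ε ∈ (0, 1/4) there exists a constant C > 0 such that for every prime q, Σ (nm)^{−1/2} ≤ C · q^{−1/4 + ε}, where the sum runs over all pairs of positive integers (n, m) with n ≤ q^{1+ε}, m ≤ q^{1/2+ε}, and q dividing n + m. -/
lemma aux_sum (K : ℕ) :
    ∑ k ∈ Finset.Icc 1 K, (k : ℝ) ^ (-(1 / 2) : ℝ) ≤ 2 * √(K : ℝ) := by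
  induction K with
  | zero => simp
  | succ K ih =>
    rw [Finset.sum_Icc_succ_top (by omega)]
    have h1 : ((K + 1 : ℕ) : ℝ) ^ (-(1 / 2) : ℝ) = (√((K : ℝ) + 1))⁻¹ := by
      rw [Real.rpow_neg (by positivity), Real.sqrt_eq_rpow]; push_cast; rfl
    rw [h1]
    push_cast
    have hs : 0 < √((K : ℝ) + 1) := by positivity
    have ha := Real.sq_sqrt (show (0 : ℝ) ≤ (K : ℝ) + 1 by positivity)
    have hb := Real.sq_sqrt (show (0 : ℝ) ≤ (K : ℝ) by positivity)
    have h2 : (√((K : ℝ) + 1))⁻¹ ≤ 2 * √((K : ℝ) + 1) - 2 * √(K : ℝ) := by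
      rw [inv_le_iff_one_le_mul₀ hs]
      nlinarith [sq_nonneg (√((K : ℝ) + 1) - √(K : ℝ))]
    linarith

lemma aux_sum' (X : ℝ) (hX : 0 ≤ X) :
    ∑ k ∈ Finset.Icc 1 ⌊X⌋₊, (k : ℝ) ^ (-(1 / 2) : ℝ) ≤ 2 * X ^ (1 / 2 : ℝ) := by
  refine (aux_sum _).trans ?_
  rw [← Real.sqrt_eq_rpow]
  gcongr
  exact Nat.floor_le hX

/-- For every `ε ∈ (0, 1/4)` there is `C > 0` such that for every prime `q`,
`∑ (nm)^{-1/2} ≤ C q^{-1/4+ε}`, the sum over pairs of positive integers `(n, m)` with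
`n ≤ q^{1+ε}`, `m ≤ q^{1/2+ε}` and `q ∣ n + m`. -/
theorem stmt8 (ε : ℝ) (hε : ε ∈ Set.Ioo 0 (1 / 4 : ℝ)) :
    ∃ C > 0, ∀ q : ℕ, q.Prime →
      ∑ p ∈ (Finset.Icc 1 ⌊(q : ℝ) ^ (1 + ε)⌋₊ ×ˢ
              Finset.Icc 1 ⌊(q : ℝ) ^ (1 / 2 + ε)⌋₊).filter (fun p => q ∣ p.1 + p.2),
          ((p.1 * p.2 : ℕ) : ℝ) ^ (-(1 / 2) : ℝ) ≤
        C * (q : ℝ) ^ (-(1 / 4) + ε) := by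
  obtain ⟨h0, h4⟩ := hε
  refine ⟨8⁻¹ ^ (-(1 / 2) : ℝ) * 2 * 2 * 2 ^ (1 / 2 : ℝ), by positivity, ?_⟩
  intro q hq
  have hq2 : (2 : ℝ) ≤ q := by exact_mod_cast hq.two_le
  have hq0 : (0 : ℝ) < q := by linarith
  have hq1 : (1 : ℝ) ≤ q := by linarith
  have hM : (q : ℝ) ^ (1 / 2 + ε) ≤ 7 / 8 * q := by
    have e1 : (q : ℝ) ^ (1 / 2 + ε) ≤ (q : ℝ) ^ (3 / 4 : ℝ) :=
      Real.rpow_le_rpow_of_exponent_le hq1 (by linarith)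
    have e2 : (q : ℝ) ^ (3 / 4 : ℝ) * (q : ℝ) ^ (1 / 4 : ℝ) = q := by
      rw [← Real.rpow_add hq0]; norm_num
    have e3 : (8 / 7 : ℝ) ≤ (q : ℝ) ^ (1 / 4 : ℝ) := by
      by_contra! h
      have h' : ((q : ℝ) ^ (1 / 4 : ℝ)) ^ 4 < (8 / 7 : ℝ) ^ 4 := by gcongr
      rw [← Real.rpow_natCast, ← Real.rpow_mul hq0.le] at h'
      norm_num at h'
      linarith
    have e4 : 0 < (q : ℝ) ^ (3 / 4 : ℝ) := by positivity
    nlinarith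
  set S := (Finset.Icc 1 ⌊(q : ℝ) ^ (1 + ε)⌋₊ ×ˢ
      Finset.Icc 1 ⌊(q : ℝ) ^ (1 / 2 + ε)⌋₊).filter (fun p => q ∣ p.1 + p.2) with hS
  have mem : ∀ p ∈ S, 1 ≤ p.1 ∧ (p.1 : ℝ) ≤ (q : ℝ) ^ (1 + ε) ∧ 1 ≤ p.2 ∧
      p.2 ≤ ⌊(q : ℝ) ^ (1 / 2 + ε)⌋₊ ∧
      (p.2 : ℝ) ≤ (q : ℝ) ^ (1 / 2 + ε) ∧ q * ((p.1 + p.2) / q) = p.1 + p.2 := by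
    intro p hp
    simp only [hS, Finset.mem_filter, Finset.mem_product, Finset.mem_Icc] at hp
    obtain ⟨⟨⟨a, b⟩, c, d⟩, e⟩ := hp
    exact ⟨a, (Nat.le_floor_iff (by positivity)).1 b, c, d,
      (Nat.le_floor_iff (by positivity)).1 d, Nat.mul_div_cancel' e⟩
  let φ : ℕ × ℕ → ℕ × ℕ := fun p => ((p.1 + p.2) / q, p.2)
  let g : ℕ × ℕ → ℝ := fun r => (8⁻¹ ^ (-(1 / 2) : ℝ) * (q : ℝ) ^ (-(1 / 2) : ℝ)) *
    ((r.1 : ℝ) ^ (-(1 / 2) : ℝ) * (r.2 : ℝ) ^ (-(1 / 2) : ℝ))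
  have kpos : ∀ p ∈ S, 1 ≤ (p.1 + p.2) / q := by
    intro p hp
    obtain ⟨a, b, c, d, d', e⟩ := mem p hp
    by_contra! h
    have : (p.1 + p.2) / q = 0 := Nat.lt_one_iff.1 h
    rw [this] at e
    omega
  have hinj : Set.InjOn φ S := by
    intro p hp r hr h
    obtain ⟨-, -, -, -, -, e⟩ := mem p hp
    obtain ⟨-, -, -, -, -, e'⟩ := mem r hr
    simp only [φ, Prod.mk.injEq] at h
    rw [h.1, e'] at e
    ext <;> omega
  have hsub : S.image φ ⊆ Finset.Icc 1 ⌊2 * (q : ℝ) ^ ε⌋₊ ×ˢ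
      Finset.Icc 1 ⌊(q : ℝ) ^ (1 / 2 + ε)⌋₊ := by
    intro r hr
    obtain ⟨p, hp, rfl⟩ := Finset.mem_image.1 hr
    obtain ⟨a, b, c, d, d', e⟩ := mem p hp
    simp only [φ, Finset.mem_product, Finset.mem_Icc]
    refine ⟨⟨kpos p hp, ?_⟩, c, d⟩
    rw [Nat.le_floor_iff (by positivity)]
    have e' : (q : ℝ) * ((p.1 + p.2) / q : ℕ) = p.1 + p.2 := by exact_mod_cast e
    have f1 : (q : ℝ) ^ (1 / 2 + ε) ≤ (q : ℝ) ^ (1 + ε) :=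
      Real.rpow_le_rpow_of_exponent_le hq1 (by linarith)
    have f2 : (q : ℝ) ^ (1 + ε) = q * (q : ℝ) ^ ε := by
      rw [Real.rpow_add hq0, Real.rpow_one]
    refine le_of_mul_le_mul_left ?_ hq0
    rw [e']
    linarith
  calc ∑ p ∈ S, ((p.1 * p.2 : ℕ) : ℝ) ^ (-(1 / 2) : ℝ)
      ≤ ∑ p ∈ S, g (φ p) := by
        refine Finset.sum_le_sum fun p hp => ?_
        obtain ⟨a, b, c, d, d', e⟩ := mem p hp
        have hk := kpos p hp
        have e' : (q : ℝ) * ((p.1 + p.2) / q : ℕ) = p.1 + p.2 := by exact_mod_cast e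
        simp only [g, φ]
        generalize (p.1 + p.2) / q = k at *
        have hk' : (1 : ℝ) ≤ k := by exact_mod_cast hk
        have c' : (1 : ℝ) ≤ p.2 := by exact_mod_cast c
        have key : 8⁻¹ * q * (k * p.2) ≤ ((p.1 * p.2 : ℕ) : ℝ) := by
          push_cast
          have : (8⁻¹ : ℝ) * q * k ≤ p.1 := by nlinarith
          nlinarith
        rw [← Real.mul_rpow (by positivity) (by positivity),
          ← Real.mul_rpow (by positivity) (by positivity),
          ← Real.mul_rpow (by positivity) (by positivity)]
        exact Real.rpow_le_rpow_of_nonpos (by positivity) key (by norm_num)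
    _ = ∑ r ∈ S.image φ, g r := (Finset.sum_image hinj).symm
    _ ≤ ∑ r ∈ Finset.Icc 1 ⌊2 * (q : ℝ) ^ ε⌋₊ ×ˢ
          Finset.Icc 1 ⌊(q : ℝ) ^ (1 / 2 + ε)⌋₊, g r :=
        Finset.sum_le_sum_of_subset_of_nonneg hsub fun r _ _ => by positivity
    _ = (8⁻¹ ^ (-(1 / 2) : ℝ) * (q : ℝ) ^ (-(1 / 2) : ℝ)) *
          ((∑ k ∈ Finset.Icc 1 ⌊2 * (q : ℝ) ^ ε⌋₊, (k : ℝ) ^ (-(1 / 2) : ℝ)) *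
          ∑ k ∈ Finset.Icc 1 ⌊(q : ℝ) ^ (1 / 2 + ε)⌋₊, (k : ℝ) ^ (-(1 / 2) : ℝ)) := by
        rw [Finset.sum_mul_sum, ← Finset.sum_product', Finset.mul_sum]
    _ ≤ (8⁻¹ ^ (-(1 / 2) : ℝ) * (q : ℝ) ^ (-(1 / 2) : ℝ)) *
          ((2 * (2 * (q : ℝ) ^ ε) ^ (1 / 2 : ℝ)) *
            (2 * ((q : ℝ) ^ (1 / 2 + ε)) ^ (1 / 2 : ℝ))) := by
        gcongr
        · exact aux_sum' _ (by positivity)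
        · exact aux_sum' _ (by positivity)
    _ = _ := by
        have : (q : ℝ) ^ (-(1 / 4) + ε) = (q : ℝ) ^ (-(1 / 2) : ℝ) *
            ((q : ℝ) ^ (ε * (1 / 2)) * (q : ℝ) ^ ((1 / 2 + ε) * (1 / 2))) := by
          rw [← Real.rpow_add hq0, ← Real.rpow_add hq0]
          congr 1
          ring
        rw [this, Real.mul_rpow (by positivity) (by positivity), ← Real.rpow_mul hq0.le,
          ← Real.rpow_mul hq0.le]
        ring
end

section
/- Fix a real number T. For every δ ∈ (0, 1/2) there exists a constant K > 0 such that for all x with 0 < x ≤ 1 one has |V₂(x) − 1| ≤ K · x^{1/2 − δ}. -/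
open Complex

/-- The weight function `V₂` (with spectral parameter `T`) from the approximate functional
equation for `L(1/2, f ⊗ χ)`:
`V₂(x) = (1/2πi) ∫_(1) (π x)^{-s} Γ((2s+1+2iT)/4) Γ((2s+1-2iT)/4) /
(Γ((1+2iT)/4) Γ((1-2iT)/4)) ds/s`, the integral taken along the vertical line `Re s = 1`. -/
noncomputable def V₂ (T : ℝ) (x : ℝ) : ℂ :=
  (1 / (2 * Real.pi)) * ∫ t : ℝ,
    (((Real.pi * x : ℝ) : ℂ) ^ (-(1 + t * I))) *
      (Complex.Gamma ((2 * (1 + t * I) + 1 + 2 * I * T) / 4) *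
        Complex.Gamma ((2 * (1 + t * I) + 1 - 2 * I * T) / 4) /
        (Complex.Gamma ((1 + 2 * I * T) / 4) * Complex.Gamma ((1 - 2 * I * T) / 4))) *
      (1 + t * I)⁻¹

open MeasureTheory Filter Topology in
lemma vert_inv (σ : ℝ) (hσ : σ ≠ 0) (R : ℝ) :
    ∫ t in (-R)..R, ((σ : ℂ) + t * I)⁻¹ = ((2 * Real.arctan (R / σ) : ℝ) : ℂ) := by
  have hpos : ∀ t : ℝ, 0 < σ ^ 2 + t ^ 2 := fun t => by positivity
  have hne : ∀ t : ℝ, (σ : ℂ) + t * I ≠ 0 := fun t h => by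
    have := congrArg Complex.re h
    simp at this; exact hσ this
  have hd : ∀ t : ℝ, HasDerivAt (fun t : ℝ => ((Real.arctan (t / σ) : ℝ) : ℂ)
      - I / 2 * ((Real.log (σ ^ 2 + t ^ 2) : ℝ) : ℂ)) (((σ : ℂ) + t * I)⁻¹) t := by
    intro t
    have h1 : HasDerivAt (fun t : ℝ => Real.arctan (t / σ)) (1 / (1 + (t / σ) ^ 2) * (1 / σ)) t :=
      ((hasDerivAt_id t).div_const σ).arctan
    have h2 : HasDerivAt (fun t : ℝ => Real.log (σ ^ 2 + t ^ 2)) ((2 * t) / (σ ^ 2 + t ^ 2)) t := by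
      have := (((hasDerivAt_id t).pow 2).const_add (σ ^ 2)).log (hpos t).ne'
      simpa using this
    have h3 := h1.ofReal_comp.sub (h2.ofReal_comp.const_mul (I / 2))
    refine h3.congr_deriv ?_
    have e1 : 1 / (1 + (t / σ) ^ 2) * (1 / σ) = σ / (σ ^ 2 + t ^ 2) := by
      have := (hpos t).ne'
      have h4 : 1 + (t / σ) ^ 2 = (σ ^ 2 + t ^ 2) / σ ^ 2 := by field_simp
      rw [h4]; field_simp
    rw [e1]
    have h5 : ((σ : ℂ) ^ 2 + (t : ℂ) ^ 2) ≠ 0 := by exact_mod_cast (hpos t).ne'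
    push_cast
    apply eq_inv_of_mul_eq_one_left
    field_simp
    linear_combination (-(t : ℂ) ^ 2) * I_sq
  rw [intervalIntegral.integral_eq_sub_of_hasDerivAt (fun t _ => hd t)]
  · rw [neg_div, Real.arctan_neg]
    push_cast
    simp
    ring
  · apply Continuous.intervalIntegrable
    exact Continuous.inv₀ (by fun_prop) hne

open MeasureTheory Filter Topology in
lemma contour_shift (g : ℂ → ℂ) (c : ℝ) (hc : 0 < c) (hc2 : c < 1 / 2)
    (hg : DifferentiableOn ℂ g {s | -(1 / 2) < s.re}) (B : ℝ)
    (hB : ∀ s : ℂ, -c ≤ s.re → s.re ≤ 1 → ‖g s‖ ≤ B)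
    (h1 : Integrable (fun t : ℝ => g (((1 : ℝ) : ℂ) + t * I) * (((1 : ℝ) : ℂ) + t * I)⁻¹))
    (h2 : Integrable (fun t : ℝ => g (((-c : ℝ) : ℂ) + t * I) * (((-c : ℝ) : ℂ) + t * I)⁻¹)) :
    (∫ t : ℝ, g (((1 : ℝ) : ℂ) + t * I) * (((1 : ℝ) : ℂ) + t * I)⁻¹)
      - (∫ t : ℝ, g (((-c : ℝ) : ℂ) + t * I) * (((-c : ℝ) : ℂ) + t * I)⁻¹)
      = 2 * Real.pi * g 0 := by
  have hopen : IsOpen {s : ℂ | -(1 / 2) < s.re} := isOpen_lt continuous_const continuous_re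
  have hD : DifferentiableOn ℂ (dslope g 0) {s | -(1 / 2) < s.re} :=
    (differentiableOn_dslope (hopen.mem_nhds (by simp))).2 hg
  have hDe : ∀ s : ℂ, s ≠ 0 → dslope g 0 s = g s * s⁻¹ - g 0 * s⁻¹ := by
    intro s hs
    rw [dslope_of_ne _ hs, slope_def_field]; field_simp; simp
  have hDb : ∀ s : ℂ, s ≠ 0 → -c ≤ s.re → s.re ≤ 1 → ‖dslope g 0 s‖ ≤ (2 * B) / ‖s‖ := by
    intro s hs ha hb
    rw [hDe s hs, ← sub_mul, norm_mul, norm_inv, div_eq_mul_inv]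
    gcongr
    have := norm_sub_le (g s) (g 0)
    have e1 := hB s ha hb
    have e2 := hB 0 (by simp; linarith) (by simp)
    linarith
  have hB0 : 0 ≤ B := (norm_nonneg _).trans (hB 0 (by simp; linarith) (by simp))
  have vline : ∀ σ : ℝ, σ ≠ 0 → -(1 / 2) < σ → ∀ R : ℝ,
      ∫ t in (-R)..R, dslope g 0 ((σ : ℂ) + t * I) =
      (∫ t in (-R)..R, g ((σ : ℂ) + t * I) * ((σ : ℂ) + t * I)⁻¹)
        - g 0 * ((2 * Real.arctan (R / σ) : ℝ) : ℂ) := by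
    intro σ hσ hσ2 R
    have hne : ∀ t : ℝ, (σ : ℂ) + t * I ≠ 0 := fun t h => by
      have := congrArg Complex.re h
      simp at this; exact hσ this
    have hci : Continuous (fun t : ℝ => ((σ : ℂ) + t * I)⁻¹) :=
      Continuous.inv₀ (by fun_prop) hne
    have hcg : Continuous (fun t : ℝ => g ((σ : ℂ) + t * I)) :=
      hg.continuousOn.comp_continuous (by fun_prop) (fun t => by simpa using hσ2)
    rw [← vert_inv σ hσ, ← intervalIntegral.integral_const_mul, ← intervalIntegral.integral_sub]
    · congr 1; ext t; rw [hDe _ (hne t)]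
    · exact (hcg.mul hci).intervalIntegrable _ _
    · exact (continuous_const.mul hci).intervalIntegrable _ _
  set H : ℝ → ℂ := fun R => (∫ x : ℝ in (-c)..1, dslope g 0 (x + ((-R : ℝ) : ℂ) * I))
      - (∫ x : ℝ in (-c)..1, dslope g 0 (x + (R : ℂ) * I)) with hH
  have rect : ∀ R : ℝ, 0 < R → H R + I * (∫ t in (-R)..R, dslope g 0 (((1 : ℝ) : ℂ) + t * I))
      - I * (∫ t in (-R)..R, dslope g 0 (((-c : ℝ) : ℂ) + t * I)) = 0 := by
    intro R hR
    have := integral_boundary_rect_eq_zero_of_differentiableOn (dslope g 0)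
      (⟨-c, -R⟩ : ℂ) (⟨1, R⟩ : ℂ) (hD.mono (by
        intro s hs
        have := hs.1
        simp only [Set.mem_preimage] at this
        rw [Set.uIcc_of_le (by linarith)] at this
        have := this.1
        simp only [Set.mem_ofPred_eq]; linarith))
    simpa [hH] using this
  have hHb : ∀ R : ℝ, 0 < R → ‖H R‖ ≤ 2 * ((2 * B) / R * |1 - (-c)|) := by
    intro R hR
    have key : ∀ y : ℝ, |y| = R →
        ‖∫ x : ℝ in (-c)..1, dslope g 0 (x + (y : ℂ) * I)‖ ≤ (2 * B) / R * |1 - (-c)| := by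
      intro y hy
      apply intervalIntegral.norm_integral_le_of_norm_le_const
      intro x hx
      rw [Set.uIoc_of_le (by linarith)] at hx
      have hn : R ≤ ‖(x : ℂ) + y * I‖ := by
        have := Complex.abs_im_le_norm ((x : ℂ) + y * I)
        simp at this; linarith
      have hne : (x : ℂ) + y * I ≠ 0 := fun h => by rw [h] at hn; simp at hn; linarith
      refine (hDb _ hne (by simpa using hx.1.le) (by simpa using hx.2)).trans ?_
      gcongr
    have a1 := key (-R) (by rw [abs_neg, abs_of_pos hR])
    have a2 := key R (abs_of_pos hR)
    have := norm_sub_le (∫ x : ℝ in (-c)..1, dslope g 0 (x + ((-R : ℝ) : ℂ) * I))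
      (∫ x : ℝ in (-c)..1, dslope g 0 (x + (R : ℂ) * I))
    simp only [hH]
    linarith
  have hHt : Tendsto H atTop (𝓝 0) := by
    apply squeeze_zero_norm' (a := fun R => 2 * ((2 * B) / R * |1 - (-c)|))
    · filter_upwards [eventually_gt_atTop 0] with R hR using hHb R hR
    · have : Tendsto (fun R : ℝ => (2 * B) / R) atTop (𝓝 0) := tendsto_const_nhds.div_atTop tendsto_id
      simpa using (this.mul_const |1 - (-c)|).const_mul 2
  have t1 := intervalIntegral_tendsto_integral h1 tendsto_neg_atTop_atBot tendsto_id
  have t2 := intervalIntegral_tendsto_integral h2 tendsto_neg_atTop_atBot tendsto_id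
  have at1 : Tendsto (fun R : ℝ => ((2 * Real.arctan (R / 1) : ℝ) : ℂ)) atTop (𝓝 (Real.pi : ℂ)) := by
    have : Tendsto (fun R : ℝ => 2 * Real.arctan (R / 1)) atTop (𝓝 (2 * (Real.pi / 2))) :=
      ((tendsto_nhds_of_tendsto_nhdsWithin Real.tendsto_arctan_atTop).comp
        (tendsto_id.atTop_div_const one_pos)).const_mul 2
    rw [show 2 * (Real.pi / 2) = Real.pi by ring] at this
    exact (continuous_ofReal.tendsto _).comp this
  have at2 : Tendsto (fun R : ℝ => ((2 * Real.arctan (R / (-c)) : ℝ) : ℂ)) atTop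
      (𝓝 ((-Real.pi : ℝ) : ℂ)) := by
    have : Tendsto (fun R : ℝ => 2 * Real.arctan (R / (-c))) atTop (𝓝 (2 * (-(Real.pi / 2)))) := by
      have h := ((tendsto_nhds_of_tendsto_nhdsWithin Real.tendsto_arctan_atTop).comp
        (tendsto_id.atTop_div_const hc)).neg.const_mul 2
      refine h.congr fun R => ?_
      simp [div_neg, Real.arctan_neg]
    rw [show 2 * (-(Real.pi / 2)) = -Real.pi by ring] at this
    exact (continuous_ofReal.tendsto _).comp this
  have lim := (hHt.const_mul I).add ((at1.sub at2).const_mul (g 0))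
  have lim2 := t1.sub t2
  refine (tendsto_nhds_unique (lim2.congr' ?_) lim).trans ?_
  · filter_upwards [eventually_gt_atTop 0] with R hR
    have r := rect R hR
    rw [vline 1 one_ne_zero (by norm_num) R, vline (-c) (by linarith) (by linarith) R] at r
    simp only [id]
    linear_combination (-I) * r + ((∫ t in (-R)..R, g (((1 : ℝ) : ℂ) + t * I) * (((1 : ℝ) : ℂ) + t * I)⁻¹)
      - (∫ t in (-R)..R, g (((-c : ℝ) : ℂ) + t * I) * (((-c : ℝ) : ℂ) + t * I)⁻¹) -
        g 0 * (((2 * Real.arctan (R / 1) : ℝ) : ℂ) - ((2 * Real.arctan (R / (-c)) : ℝ) : ℂ))) * I_sq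
  · push_cast; ring

open MeasureTheory in
lemma norm_Gamma_le (z : ℂ) (hz : 0 < z.re) : ‖Complex.Gamma z‖ ≤ Real.Gamma z.re := by
  rw [Complex.Gamma_eq_integral hz, Real.Gamma_eq_integral hz, Complex.GammaIntegral]
  refine (norm_integral_le_integral_norm _).trans (le_of_eq ?_)
  refine setIntegral_congr_fun measurableSet_Ioi fun x hx => ?_
  simp only [norm_mul]
  rw [norm_cpow_eq_rpow_re_of_pos hx, Complex.norm_of_nonneg (Real.exp_pos _).le]
  simp

lemma norm_Gamma_le_div (z : ℂ) (hz : 0 < z.re) :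
    ‖Complex.Gamma z‖ ≤ Real.Gamma (z.re + 1) * ‖z‖⁻¹ := by
  have hne : z ≠ 0 := fun h => by simp [h] at hz
  have h := norm_Gamma_le (z + 1) (by simp; linarith)
  rw [Complex.Gamma_add_one z hne, norm_mul] at h
  have : 0 < ‖z‖ := norm_pos_iff.2 hne
  rw [← div_eq_mul_inv, le_div_iff₀ this]
  simpa [mul_comm] using h

open MeasureTheory in
lemma integrable_inv_sq (a b : ℝ) (ha : a ≠ 0) :
    Integrable (fun t : ℝ => (‖(a : ℂ) + ((t + b : ℝ) : ℂ) * I‖ ^ 2)⁻¹) := by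
  have h := (((integrable_inv_one_add_sq.comp_div ha).comp_add_right b).const_mul ((a ^ 2)⁻¹))
  refine h.congr (Filter.Eventually.of_forall fun t => ?_)
  simp only
  rw [Complex.sq_norm, normSq_add_mul_I, ← mul_inv]
  congr 1; field_simp

/-- the gamma ratio -/
noncomputable def GG (T : ℝ) (s : ℂ) : ℂ :=
  (Complex.Gamma ((2 * s + 1 + 2 * I * T) / 4) * Complex.Gamma ((2 * s + 1 - 2 * I * T) / 4) /
        (Complex.Gamma ((1 + 2 * I * T) / 4) * Complex.Gamma ((1 - 2 * I * T) / 4)))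

lemma re_p (T : ℝ) (s : ℂ) : ((2 * s + 1 + 2 * I * T) / 4).re = (2 * s.re + 1) / 4 := by
  rw [show (4 : ℂ) = ((4 : ℝ) : ℂ) by norm_num, Complex.div_ofReal_re]; simp

lemma re_m (T : ℝ) (s : ℂ) : ((2 * s + 1 - 2 * I * T) / 4).re = (2 * s.re + 1) / 4 := by
  rw [show (4 : ℂ) = ((4 : ℝ) : ℂ) by norm_num, Complex.div_ofReal_re]; simp

lemma GG_zero (T : ℝ) : GG T 0 = 1 := by
  have h1 := Complex.Gamma_ne_zero_of_re_pos (s := (1 + 2 * I * T) / 4) (by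
    have := re_p T 0; simp at this; simp)
  have h2 := Complex.Gamma_ne_zero_of_re_pos (s := (1 - 2 * I * T) / 4) (by
    have := re_m T 0; simp at this; simp)
  simp only [GG, mul_zero, zero_add]
  exact div_self (mul_ne_zero h1 h2)

lemma ne_neg_nat {z : ℂ} (hz : 0 < z.re) (m : ℕ) : z ≠ -m := fun h => by
  have : (0 : ℝ) ≤ m := m.cast_nonneg
  rw [h] at hz; simp at hz; linarith

lemma GG_diff (T : ℝ) : DifferentiableOn ℂ (GG T) {s | -(1 / 2) < s.re} := by
  intro s hs
  simp only [Set.mem_ofPred_eq] at hs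
  apply DifferentiableAt.differentiableWithinAt
  have h1 : DifferentiableAt ℂ Complex.Gamma ((2 * s + 1 + 2 * I * T) / 4) :=
    Complex.differentiableAt_Gamma _ (ne_neg_nat (by rw [re_p]; linarith))
  have h2 : DifferentiableAt ℂ Complex.Gamma ((2 * s + 1 - 2 * I * T) / 4) :=
    Complex.differentiableAt_Gamma _ (ne_neg_nat (by rw [re_m]; linarith))
  unfold GG
  refine DifferentiableAt.div_const (DifferentiableAt.mul ?_ ?_) _
  · exact DifferentiableAt.comp s h1 (by fun_prop)
  · exact DifferentiableAt.comp s h2 (by fun_prop)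

lemma GG_bound (T : ℝ) (c : ℝ) (hc : c < 1 / 2) :
    ∃ B, ∀ s : ℂ, -c ≤ s.re → s.re ≤ 1 → ‖GG T s‖ ≤ B := by
  have hcont : ContinuousOn (fun u : ℝ => Real.Gamma ((2 * u + 1) / 4)) (Set.Icc (-c) 1) := by
    intro u hu
    apply ContinuousAt.continuousWithinAt
    have : 0 < (2 * u + 1) / 4 := by linarith [hu.1]
    exact ContinuousAt.comp (f := fun u : ℝ => (2 * u + 1) / 4)
      (Real.differentiableOn_Gamma_Ioi.differentiableAt (Ioi_mem_nhds this)).continuousAt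
      (by fun_prop)
  obtain ⟨M, hM⟩ := isCompact_Icc.exists_bound_of_continuousOn hcont
  refine ⟨M * M / ‖Complex.Gamma ((1 + 2 * I * T) / 4) * Complex.Gamma ((1 - 2 * I * T) / 4)‖, ?_⟩
  intro s h1 h2
  have hp : 0 < (2 * s.re + 1) / 4 := by linarith
  have a0 := (le_abs_self _).trans (hM s.re ⟨h1, h2⟩)
  have a1 := norm_Gamma_le _ (by rw [re_p T s]; exact hp)
  rw [re_p] at a1
  replace a1 := a1.trans a0
  have a2 := norm_Gamma_le _ (by rw [re_m T s]; exact hp)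
  rw [re_m] at a2
  replace a2 := a2.trans a0
  rw [GG, norm_div, norm_mul]
  have : 0 ≤ M := (norm_nonneg _).trans a1
  gcongr

open MeasureTheory in
lemma GG_integrable (T : ℝ) (σ : ℝ) (hσ : -(1 / 2) < σ) (h0 : σ ≠ 0) (y : ℝ) (hy : 0 < y) :
    Integrable (fun t : ℝ => ((y : ℂ) ^ (-((σ : ℂ) + t * I)) * GG T ((σ : ℂ) + t * I)) *
      ((σ : ℂ) + t * I)⁻¹) := by
  have hne : ∀ t : ℝ, (σ : ℂ) + t * I ≠ 0 := fun t h => by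
    have := congrArg Complex.re h
    simp at this; exact h0 this
  have hci : Continuous (fun t : ℝ => ((σ : ℂ) + t * I)⁻¹) :=
    Continuous.inv₀ (by fun_prop) hne
  have hcg : Continuous (fun t : ℝ => GG T ((σ : ℂ) + t * I)) :=
    (GG_diff T).continuousOn.comp_continuous (by fun_prop) (fun t => by simpa using hσ)
  have hy' : (y : ℂ) ≠ 0 := by exact_mod_cast hy.ne'
  have hcy : Continuous (fun t : ℝ => (y : ℂ) ^ (-((σ : ℂ) + t * I))) :=
    Continuous.const_cpow (by fun_prop) (Or.inl hy')
  set N := ‖Complex.Gamma ((1 + 2 * I * T) / 4) * Complex.Gamma ((1 - 2 * I * T) / 4)‖ with hN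
  set q := (2 * σ + 1) / 4 with hq
  have hqpos : 0 < q := by rw [hq]; linarith
  set C := y ^ (-σ) * (Real.Gamma (q + 1) * 2 * Real.Gamma q / N) with hC
  have hC0 : 0 ≤ C := by
    have := (Real.Gamma_pos_of_pos hqpos).le
    have := (Real.Gamma_pos_of_pos (show 0 < q + 1 by linarith)).le
    positivity
  have hi := ((integrable_inv_sq (σ + 1 / 2) T (by linarith)).add
    (integrable_inv_sq σ 0 h0)).const_mul C
  refine hi.mono' ((hcy.mul hcg).mul hci).aestronglyMeasurable (Filter.Eventually.of_forall ?_)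
  intro t
  simp only [Pi.add_apply, add_zero]
  set s : ℂ := (σ : ℂ) + t * I with hs
  set p : ℂ := ((σ + 1 / 2 : ℝ) : ℂ) + ((t + T : ℝ) : ℂ) * I with hpdef
  have hsre : s.re = σ := by simp [hs]
  have hp : (2 * s + 1 + 2 * I * T) / 4 = p / 2 := by
    simp only [hs, hpdef]; push_cast; ring
  have b1 : ‖Complex.Gamma ((2 * s + 1 + 2 * I * T) / 4)‖ ≤ Real.Gamma (q + 1) * 2 * ‖p‖⁻¹ := by
    have := norm_Gamma_le_div ((2 * s + 1 + 2 * I * T) / 4) (by rw [re_p, hsre]; exact hqpos)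
    rw [re_p, hsre] at this
    refine this.trans (le_of_eq ?_)
    rw [hp, norm_div]; simp; ring
  have b2 : ‖Complex.Gamma ((2 * s + 1 - 2 * I * T) / 4)‖ ≤ Real.Gamma q := by
    have := norm_Gamma_le ((2 * s + 1 - 2 * I * T) / 4) (by rw [re_m, hsre]; exact hqpos)
    rwa [re_m, hsre] at this
  have b3 : ‖(y : ℂ) ^ (-s)‖ = y ^ (-σ) := by
    rw [norm_cpow_eq_rpow_re_of_pos hy]; simp [hsre]
  have b4 : ‖GG T s‖ ≤ Real.Gamma (q + 1) * 2 * ‖p‖⁻¹ * Real.Gamma q / N := by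
    rw [GG, norm_div, norm_mul]
    have := (norm_nonneg _).trans b1
    gcongr
  rw [norm_mul, norm_mul, b3, norm_inv]
  calc y ^ (-σ) * ‖GG T s‖ * ‖s‖⁻¹
      ≤ y ^ (-σ) * (Real.Gamma (q + 1) * 2 * ‖p‖⁻¹ * Real.Gamma q / N) * ‖s‖⁻¹ := by gcongr
    _ = C * (‖p‖⁻¹ * ‖s‖⁻¹) := by rw [hC]; ring
    _ ≤ C * ((‖p‖ ^ 2)⁻¹ + (‖s‖ ^ 2)⁻¹) := by
      gcongr
      rw [← inv_pow, ← inv_pow]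
      nlinarith [sq_nonneg (‖p‖⁻¹ - ‖s‖⁻¹), sq_nonneg (‖p‖⁻¹), sq_nonneg (‖s‖⁻¹)]

open MeasureTheory in
/-- **`V₂(x) ∼ 1` for small `x`.** Fix a real `T`. For every `δ ∈ (0, 1/2)` there is
`K > 0` such that `|V₂(x) - 1| ≤ K · x^{1/2 - δ}` for all `0 < x ≤ 1`. -/
theorem stmt13 (T : ℝ) (δ : ℝ) (hδ : δ ∈ Set.Ioo 0 (1 / 2 : ℝ)) :
    ∃ K > 0, ∀ x : ℝ, 0 < x → x ≤ 1 →
      ‖V₂ T x - 1‖ ≤ K * x ^ (1 / 2 - δ) := by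
  obtain ⟨hδ0, hδ1⟩ := hδ
  set c := 1 / 2 - δ with hcdef
  have hc : 0 < c := by linarith
  have hc2 : c < 1 / 2 := by linarith
  set J := ∫ t : ℝ, ‖GG T (((-c : ℝ) : ℂ) + t * I) * (((-c : ℝ) : ℂ) + t * I)⁻¹‖ with hJ
  have hJ0 : 0 ≤ J := integral_nonneg fun _ => norm_nonneg _
  have hpi := Real.pi_pos
  refine ⟨1 / (2 * Real.pi) * (Real.pi ^ c * J) + 1, by positivity, fun x hx _ => ?_⟩
  have hy : 0 < Real.pi * x := by positivity
  have hy' : ((Real.pi * x : ℝ) : ℂ) ≠ 0 := by exact_mod_cast hy.ne'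
  obtain ⟨B, hB⟩ := GG_bound T c hc2
  have hcont : ContinuousOn (fun u : ℝ => (Real.pi * x) ^ (-u)) (Set.Icc (-c) 1) :=
    (Continuous.rpow continuous_const continuous_neg (fun _ => Or.inl hy.ne')).continuousOn
  obtain ⟨M, hM⟩ := isCompact_Icc.exists_bound_of_continuousOn hcont
  have key := contour_shift (fun s => ((Real.pi * x : ℝ) : ℂ) ^ (-s) * GG T s) c hc hc2
    (by
      refine DifferentiableOn.mul (fun s _ => ?_) (GG_diff T)
      exact (DifferentiableAt.const_cpow (by fun_prop) (Or.inl hy')).differentiableWithinAt)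
    (M * B)
    (by
      intro s h1 h2
      have a1 : ‖((Real.pi * x : ℝ) : ℂ) ^ (-s)‖ ≤ M := by
        rw [norm_cpow_eq_rpow_re_of_pos hy, neg_re]
        exact (le_abs_self _).trans (hM s.re ⟨h1, h2⟩)
      rw [norm_mul]
      have := (norm_nonneg _).trans a1
      gcongr
      exact hB s h1 h2)
    (GG_integrable T 1 (by norm_num) one_ne_zero _ hy)
    (GG_integrable T (-c) (by linarith) (by linarith) _ hy)
  simp only [neg_zero, cpow_zero, GG_zero, mul_one] at key
  have hV : V₂ T x - 1 = (1 / (2 * Real.pi)) * ∫ t : ℝ,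
      (((Real.pi * x : ℝ) : ℂ) ^ (-(((-c : ℝ) : ℂ) + t * I)) * GG T (((-c : ℝ) : ℂ) + t * I)) *
      (((-c : ℝ) : ℂ) + t * I)⁻¹ := by
    have e : V₂ T x = (1 / (2 * Real.pi)) * ∫ t : ℝ,
      (((Real.pi * x : ℝ) : ℂ) ^ (-(((1 : ℝ) : ℂ) + t * I)) * GG T (((1 : ℝ) : ℂ) + t * I)) *
      (((1 : ℝ) : ℂ) + t * I)⁻¹ := by
      simp only [V₂, GG, ofReal_one]
    rw [e, eq_add_of_sub_eq key]
    have : (Real.pi : ℂ) ≠ 0 := by exact_mod_cast hpi.ne'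
    rw [mul_add, one_div, inv_mul_cancel₀ (mul_ne_zero two_ne_zero this), add_sub_cancel_left]
  rw [hV, norm_mul]
  have n1 : ‖(1 / (2 * Real.pi) : ℂ)‖ = 1 / (2 * Real.pi) := by
    simp [abs_of_pos hpi]
  have n2 : ‖∫ t : ℝ,
      (((Real.pi * x : ℝ) : ℂ) ^ (-(((-c : ℝ) : ℂ) + t * I)) * GG T (((-c : ℝ) : ℂ) + t * I)) *
      (((-c : ℝ) : ℂ) + t * I)⁻¹‖ ≤ Real.pi ^ c * x ^ c * J := by
    refine (norm_integral_le_integral_norm _).trans (le_of_eq ?_)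
    rw [hJ, ← integral_const_mul, ← Real.mul_rpow hpi.le hx.le]
    congr 1; ext t
    rw [mul_assoc, norm_mul, norm_cpow_eq_rpow_re_of_pos hy]
    simp
  rw [n1]
  have hxc : 0 < x ^ c := Real.rpow_pos_of_pos hx c
  calc _ ≤ 1 / (2 * Real.pi) * (Real.pi ^ c * x ^ c * J) := by gcongr
    _ ≤ _ := by nlinarith
end
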